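/- Proposition 5 (main case): Let n ≥ 5 and let ψ be a pure n-qubit state satisfying the preferred-basis condition. If M(ρ_ψ) > C(n-1, 2), then ψ is genuinely n-partite entangled: there is no bipartition of the n qubits into two nonempty sets over which ψ is a product of two pure states. -/

import Mathlib

noncomputable def pauli : ℕ → Matrix (Fin 2) (Fin 2) ℂ
  | 1 => !![0, 1; 1, 0]
  | 2 => !![0, -Complex.I; Complex.I, 0]
  | 3 => !![1, 0; 0, -1]
  | _ => 1

/-- The `ι`-fold Kronecker product of single-qubit operators `pauli (f k)`. -/
noncomputable def kronOp {ι : Type*} [Fintype ι] [DecidableEq ι] (f : ι → ℕ) :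
    Matrix (ι → Fin 2) (ι → Fin 2) ℂ :=
  Matrix.of fun x y => ∏ k, pauli (f k) (x k) (y k)

/-- Two-body correlation `T^{kl}_{ij}(ρ)`. -/
noncomputable def corr {ι : Type*} [Fintype ι] [DecidableEq ι]
    (ρ : Matrix (ι → Fin 2) (ι → Fin 2) ℂ) (k l : ι) (i j : ℕ) : ℝ :=
  ((ρ * kronOp (fun q => if q = k then i else if q = l then j else 0)).trace).re

/-- Single-qubit Bloch vector component `b^{(q)}_i(ρ)`. -/
noncomputable def bloch {ι : Type*} [Fintype ι] [DecidableEq ι]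
    (ρ : Matrix (ι → Fin 2) (ι → Fin 2) ℂ) (q : ι) (i : ℕ) : ℝ :=
  ((ρ * kronOp (fun p => if p = q then i else 0)).trace).re

/-- `M_{kl}(ρ)`. -/
noncomputable def Mkl {ι : Type*} [Fintype ι] [DecidableEq ι]
    (ρ : Matrix (ι → Fin 2) (ι → Fin 2) ℂ) (k l : ι) : ℝ :=
  ∑ i ∈ Finset.Icc 1 2, ∑ j ∈ Finset.Icc 1 2, (corr ρ k l i j) ^ 2

/-- `M(ρ) = Σ_{k<l} M_{kl}(ρ)`. -/
noncomputable def Mtot {ι : Type*} [Fintype ι] [LinearOrder ι]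
    (ρ : Matrix (ι → Fin 2) (ι → Fin 2) ℂ) : ℝ :=
  ∑ p ∈ Finset.univ.filter (fun p : ι × ι => p.1 < p.2), Mkl ρ p.1 p.2

/-- Density matrix of a pure state `ψ`: `ρ_ψ = ψ ψ†`. -/
noncomputable def pureDensity {ι : Type*} [Fintype ι] [DecidableEq ι]
    (ψ : (ι → Fin 2) → ℂ) : Matrix (ι → Fin 2) (ι → Fin 2) ℂ :=
  Matrix.of fun x y => ψ x * (starRingEnd ℂ) (ψ y)

/-- `ψ` is a unit vector. -/
def UnitVec {ι : Type*} [Fintype ι] [DecidableEq ι] (ψ : (ι → Fin 2) → ℂ) : Prop :=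
  ∑ x, Complex.normSq (ψ x) = 1

/-- Preferred-basis condition: all transverse Bloch components vanish. -/
def PreferredBasis {ι : Type*} [Fintype ι] [DecidableEq ι]
    (ρ : Matrix (ι → Fin 2) (ι → Fin 2) ℂ) : Prop :=
  ∀ q : ι, bloch ρ q 1 = 0 ∧ bloch ρ q 2 = 0

/-- `P` is a partition of `Fin n` into `k` nonempty blocks. -/
def IsPartition {n k : ℕ} (P : Fin k → Finset (Fin n)) : Prop :=
  (∀ m, (P m).Nonempty) ∧ (∀ m m', m ≠ m' → Disjoint (P m) (P m')) ∧
    ∀ q : Fin n, ∃ m, q ∈ P m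

/-- Restriction of an `n`-bit string to a block of qubits. -/
def restrictB {n : ℕ} (S : Finset (Fin n)) (f : Fin n → Fin 2) : (↥S → Fin 2) :=
  fun q => f q.val

/-- `ψ` is the tensor product, under the canonical qubit-reordering isomorphism,
of pure states on the blocks of `P`. -/
def IsProductOver {n k : ℕ} (ψ : (Fin n → Fin 2) → ℂ) (P : Fin k → Finset (Fin n)) : Prop :=
  ∃ φ : (m : Fin k) → ((↥(P m) → Fin 2) → ℂ),
    (∀ m, UnitVec (φ m)) ∧ ∀ f : Fin n → Fin 2, ψ f = ∏ m, φ m (restrictB (P m) f)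

/-!
The mean values of pairwise anticommuting Hermitian involutions satisfy a Bessel inequality: with
`A = ∑ ⟨Kᵢ⟩ Kᵢ` one has `A² = ∑ ⟨Kᵢ⟩²`, so that `0 ≤ ⟨(A - 1)²⟩ = 1 - ∑ ⟨Kᵢ⟩²`. Applied to
`σ_a ⊗ σ_1`, `σ_a ⊗ σ_2` on the qubits `k, l` and `σ_b ⊗ σ_1`, `σ_b ⊗ σ_2` on the qubits `k, m`,
with `{a, b} = {1, 2}`, it gives the monogamy relation `M_kl + M_km ≤ 2`.

In a product state the correlations across the cut are products of transverse Bloch components,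
hence vanish, and `M` is a sum over pairs inside the blocks. Monogamy bounds the row sum of a qubit
in a block of size `a` by `a - 1`, or by `2` when `a = 2`, and for `n ≥ 5` the resulting bound on
`M` is largest when a single qubit is split off.
-/

section Pauli

theorem pauli_zero : pauli 0 = 1 := rfl

theorem pauli_isHermitian (i : ℕ) : (pauli i).IsHermitian := by
  ext x y
  match i with
  | 0 | 1 | 2 | 3 | _ + 4 => fin_cases x <;> fin_cases y <;> simp [pauli]

theorem pauli_mul_self (i : ℕ) : pauli i * pauli i = 1 := by
  ext x y
  match i with
  | 0 | 1 | 2 | 3 | _ + 4 => fin_cases x <;> fin_cases y <;> simp [pauli]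

theorem pauli_anticomm {i j : ℕ} (hi : i ∈ Finset.Icc 1 3) (hj : j ∈ Finset.Icc 1 3) (hij : i ≠ j) :
    pauli i * pauli j = -(pauli j * pauli i) := by
  rw [Finset.mem_Icc] at hi hj
  obtain ⟨_, _⟩ := hi
  obtain ⟨_, _⟩ := hj
  ext x y
  interval_cases i <;> interval_cases j <;> first
    | exact absurd rfl hij
    | fin_cases x <;> fin_cases y <;> simp [pauli]

variable {ι : Type*} [Fintype ι] [DecidableEq ι]

theorem kronOp_isHermitian (f : ι → ℕ) : (kronOp f).IsHermitian := by
  ext x y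
  simp only [Matrix.conjTranspose_apply, kronOp, Matrix.of_apply, star_prod,
    (pauli_isHermitian _).apply]

theorem kronOp_mul_apply (f g : ι → ℕ) (x y : ι → Fin 2) :
    (kronOp f * kronOp g) x y = ∏ q, (pauli (f q) * pauli (g q)) (x q) (y q) := by
  simp only [Matrix.mul_apply, kronOp, Matrix.of_apply, Fintype.prod_sum, Finset.prod_mul_distrib]

theorem kronOp_zero : kronOp (fun _ : ι => 0) = 1 := by
  ext x y
  simp [kronOp, pauli_zero, Matrix.one_apply, Finset.prod_boole, funext_iff]

theorem kronOp_mul_self (f : ι → ℕ) : kronOp f * kronOp f = 1 := by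
  ext x y
  simp [kronOp_mul_apply, pauli_mul_self, Matrix.one_apply, Finset.prod_boole, funext_iff]

theorem kronOp_anticomm {f g : ι → ℕ} (c : ι)
    (hc : pauli (f c) * pauli (g c) = -(pauli (g c) * pauli (f c)))
    (hcomm : ∀ q ≠ c, Commute (pauli (f q)) (pauli (g q))) :
    kronOp f * kronOp g = -(kronOp g * kronOp f) := by
  ext x y
  rw [Matrix.neg_apply, kronOp_mul_apply, kronOp_mul_apply, Fintype.prod_eq_mul_prod_compl c,
    Fintype.prod_eq_mul_prod_compl c, hc, Matrix.neg_apply, neg_mul]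
  congr 2
  refine Finset.prod_congr rfl fun q hq => ?_
  rw [(hcomm q (by simpa using hq)).eq]

/-- The observable with `σ_i` on qubit `k`, `σ_j` on qubit `l` and the identity elsewhere, whose
mean value is the correlation `T^{kl}_{ij}`. -/
noncomputable def pauliPair (k l : ι) (i j : ℕ) : Matrix (ι → Fin 2) (ι → Fin 2) ℂ :=
  kronOp fun q => if q = k then i else if q = l then j else 0

theorem pauliPair_comm {k l : ι} (hkl : k ≠ l) (i j : ℕ) :
    pauliPair k l i j = pauliPair l k j i := by
  unfold pauliPair
  congr 1
  ext q
  split_ifs with hk hl <;> simp_all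

theorem pauliPair_anticomm_of_right {k l : ι} (hkl : k ≠ l) (a : ℕ) {i j : ℕ}
    (hij : pauli i * pauli j = -(pauli j * pauli i)) :
    pauliPair k l a i * pauliPair k l a j = -(pauliPair k l a j * pauliPair k l a i) := by
  refine kronOp_anticomm l (by simpa [hkl.symm] using hij) fun q hq => ?_
  simp [hq]

theorem pauliPair_anticomm_of_left {k l m : ι} (hlm : l ≠ m) {a b : ℕ}
    (hab : pauli a * pauli b = -(pauli b * pauli a)) (i j : ℕ) :
    pauliPair k l a i * pauliPair k m b j = -(pauliPair k m b j * pauliPair k l a i) := by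
  refine kronOp_anticomm k (by simpa using hab) fun q hq => ?_
  obtain hql | rfl := ne_or_eq q l
  · simp [hq, hql, pauli_zero]
  · simp [hq, hlm, pauli_zero]

end Pauli

section Bessel

open scoped ComplexOrder

/-- Density matrices, i.e. possibly mixed quantum states. -/
structure IsDensityMatrix {d : Type*} [Fintype d] (ρ : Matrix d d ℂ) : Prop where
  posSemidef : ρ.PosSemidef
  trace_eq_one : ρ.trace = 1

theorem IsDensityMatrix.isHermitian {d : Type*} [Fintype d] {ρ : Matrix d d ℂ}
    (hρ : IsDensityMatrix ρ) : ρ.IsHermitian :=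
  hρ.posSemidef.isHermitian

theorem UnitVec.isDensityMatrix {ι : Type*} [Fintype ι] [DecidableEq ι] {ψ : (ι → Fin 2) → ℂ}
    (hψ : UnitVec ψ) : IsDensityMatrix (pureDensity ψ) where
  posSemidef := Matrix.posSemidef_vecMulVec_self_star ψ
  trace_eq_one := by
    simp only [Matrix.trace, Matrix.diag_apply, pureDensity, Matrix.of_apply, Complex.mul_conj]
    exact_mod_cast hψ

theorem sum_smul_mul_self_of_anticomm {R A κ : Type*} [CommRing R] [Ring A] [Algebra R A]
    {s : Finset κ} (t : κ → R) {K : κ → A} (hsq : ∀ i ∈ s, K i * K i = 1)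
    (hanti : (s : Set κ).Pairwise fun i j => K i * K j = -(K j * K i)) :
    (∑ i ∈ s, t i • K i) * ∑ i ∈ s, t i • K i = (∑ i ∈ s, t i ^ 2) • (1 : A) := by
  induction s using Finset.cons_induction with
  | empty => simp
  | cons i s hi ih =>
    have hcross : K i * ∑ j ∈ s, t j • K j = -((∑ j ∈ s, t j • K j) * K i) := by
      rw [Finset.mul_sum, Finset.sum_mul, ← Finset.sum_neg_distrib]
      refine Finset.sum_congr rfl fun j hj => ?_
      rw [mul_smul_comm, smul_mul_assoc, ← smul_neg,
        hanti (by simp) (by simp [hj]) (ne_of_mem_of_not_mem hj hi).symm]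
    have ih := ih (fun j hj => hsq j (Finset.mem_cons_of_mem hj))
      (hanti.mono (by simp))
    rw [Finset.sum_cons, Finset.sum_cons, add_mul, mul_add, mul_add, ih, smul_mul_smul_comm,
      hsq i (Finset.mem_cons_self i s), smul_mul_assoc, hcross, mul_smul_comm, add_smul, sq]
    module

theorem sum_sq_re_trace_mul_le_one {d κ : Type*} [Fintype d] [DecidableEq d] {ρ : Matrix d d ℂ}
    (hρ : IsDensityMatrix ρ) {s : Finset κ} {K : κ → Matrix d d ℂ}
    (hherm : ∀ i ∈ s, (K i).IsHermitian) (hsq : ∀ i ∈ s, K i * K i = 1)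
    (hanti : (s : Set κ).Pairwise fun i j => K i * K j = -(K j * K i)) :
    ∑ i ∈ s, (ρ * K i).trace.re ^ 2 ≤ 1 := by
  set t : κ → ℝ := fun i => (ρ * K i).trace.re
  set A : Matrix d d ℂ := ∑ i ∈ s, t i • K i with hA
  have hA_herm : (A - 1).IsHermitian :=
    Matrix.IsHermitian.sub (isSelfAdjoint_sum s fun i hi => (IsSelfAdjoint.all (t i)).smul
      (hherm i hi)) Matrix.isHermitian_one
  have hA_sq : A * A = (∑ i ∈ s, t i ^ 2) • (1 : Matrix d d ℂ) :=
    sum_smul_mul_self_of_anticomm t hsq hanti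
  have hA_mean : (ρ * A).trace.re = ∑ i ∈ s, t i ^ 2 := by
    simp [hA, Matrix.mul_sum, Matrix.trace_sum, t, sq]
  have hnonneg : 0 ≤ ((A - 1) * ρ * (A - 1)).trace := by
    have := hρ.posSemidef.mul_mul_conjTranspose_same (A - 1)
    rw [hA_herm.eq] at this
    exact this.trace_nonneg
  have hexpand : ((A - 1) * ρ * (A - 1)).trace = (ρ * (A * A)).trace - 2 * (ρ * A).trace + 1 := by
    rw [Matrix.trace_mul_cycle, ← hρ.trace_eq_one, Matrix.trace_mul_comm, two_mul]
    simp only [mul_sub, sub_mul, mul_one, one_mul, Matrix.trace_sub]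
    ring
  have hre := (Complex.nonneg_iff.mp (hexpand ▸ hnonneg)).1
  simp only [hA_sq, Matrix.mul_smul, mul_one, Matrix.trace_smul, hρ.trace_eq_one, Complex.add_re,
    Complex.sub_re, Complex.one_re, Complex.smul_re, smul_eq_mul, Complex.mul_re, Complex.re_ofNat,
    Complex.im_ofNat, zero_mul, sub_zero, hA_mean] at hre
  linarith

end Bessel

section Correlations

variable {ι : Type*} [Fintype ι] [DecidableEq ι] {ρ : Matrix (ι → Fin 2) (ι → Fin 2) ℂ}

theorem trace_mul_kronOp_im_eq_zero (hρ : ρ.IsHermitian) (f : ι → ℕ) :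
    (ρ * kronOp f).trace.im = 0 := by
  rw [← Complex.conj_eq_iff_im, starRingEnd_apply, ← Matrix.trace_conjTranspose,
    Matrix.conjTranspose_mul, hρ.eq, (kronOp_isHermitian f).eq, Matrix.trace_mul_comm]

theorem corr_eq_re_trace (ρ : Matrix (ι → Fin 2) (ι → Fin 2) ℂ) (k l : ι) (i j : ℕ) :
    corr ρ k l i j = (ρ * pauliPair k l i j).trace.re := rfl

theorem Mkl_nonneg (ρ : Matrix (ι → Fin 2) (ι → Fin 2) ℂ) (k l : ι) : 0 ≤ Mkl ρ k l :=
  Finset.sum_nonneg fun _ _ => Finset.sum_nonneg fun _ _ => sq_nonneg _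

theorem Mkl_comm (ρ : Matrix (ι → Fin 2) (ι → Fin 2) ℂ) (k l : ι) : Mkl ρ k l = Mkl ρ l k := by
  obtain rfl | hkl := eq_or_ne k l
  · rfl
  · simp only [Mkl, corr_eq_re_trace, pauliPair_comm hkl]
    exact Finset.sum_comm

theorem sum_corr_sq_add_sum_corr_sq_le_one (hρ : IsDensityMatrix ρ) {k l m : ι} (hkl : k ≠ l)
    (hkm : k ≠ m) (hlm : l ≠ m) {a b : ℕ} (hab : pauli a * pauli b = -(pauli b * pauli a)) :
    ∑ j ∈ Finset.Icc 1 2, corr ρ k l a j ^ 2 + ∑ j ∈ Finset.Icc 1 2, corr ρ k m b j ^ 2 ≤ 1 := by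
  have hpauli {i j : ℕ} (hi : i ∈ Finset.Icc 1 2) (hj : j ∈ Finset.Icc 1 2) (hij : i ≠ j) :
      pauli i * pauli j = -(pauli j * pauli i) :=
    pauli_anticomm (Finset.Icc_subset_Icc_right (by norm_num) hi)
      (Finset.Icc_subset_Icc_right (by norm_num) hj) hij
  have hbessel := sum_sq_re_trace_mul_le_one hρ
    (s := (Finset.Icc 1 2).disjSum (Finset.Icc 1 2))
    (K := Sum.elim (pauliPair k l a) (pauliPair k m b))
    (by rintro (i | i) - <;> exact kronOp_isHermitian _)
    (by rintro (i | i) - <;> exact kronOp_mul_self _) ?_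
  · rwa [Finset.sum_disjSum] at hbessel
  · rintro (i | i) hi (j | j) hj hij
    · exact pauliPair_anticomm_of_right hkl a
        (hpauli (Finset.inl_mem_disjSum.mp hi) (Finset.inl_mem_disjSum.mp hj) (by simpa using hij))
    · exact pauliPair_anticomm_of_left hlm hab i j
    · exact (neg_eq_iff_eq_neg.mpr (pauliPair_anticomm_of_left hlm hab j i)).symm
    · exact pauliPair_anticomm_of_right hkm b
        (hpauli (Finset.inr_mem_disjSum.mp hi) (Finset.inr_mem_disjSum.mp hj) (by simpa using hij))

theorem Mkl_add_Mkl_le_two (hρ : IsDensityMatrix ρ) {k l m : ι} (hkl : k ≠ l) (hkm : k ≠ m)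
    (hlm : l ≠ m) : Mkl ρ k l + Mkl ρ k m ≤ 2 := by
  have h₁₂ : pauli 1 * pauli 2 = -(pauli 2 * pauli 1) :=
    pauli_anticomm (by simp) (by simp) (by norm_num)
  have hl₁m₂ := sum_corr_sq_add_sum_corr_sq_le_one hρ hkl hkm hlm h₁₂
  have hl₂m₁ := sum_corr_sq_add_sum_corr_sq_le_one hρ hkl hkm hlm
    (neg_eq_iff_eq_neg.mpr h₁₂).symm
  have hrows (q : ι) : Mkl ρ k q =
      ∑ j ∈ Finset.Icc 1 2, corr ρ k q 1 j ^ 2 + ∑ j ∈ Finset.Icc 1 2, corr ρ k q 2 j ^ 2 :=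
    Finset.sum_Icc_succ_top one_le_two _ |>.trans (by simp)
  rw [hrows, hrows]
  linarith

theorem two_mul_Mtot {ι : Type*} [Fintype ι] [LinearOrder ι]
    (ρ : Matrix (ι → Fin 2) (ι → Fin 2) ℂ) :
    2 * Mtot ρ = ∑ k, ∑ l ∈ Finset.univ.erase k, Mkl ρ k l := by
  have hlt : Mtot ρ = ∑ k, ∑ l, if k < l then Mkl ρ k l else 0 := by
    rw [Mtot, Finset.sum_filter, Fintype.sum_prod_type]
  have hgt : Mtot ρ = ∑ k, ∑ l, if l < k then Mkl ρ k l else 0 := by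
    rw [hlt, Finset.sum_comm]
    exact Fintype.sum_congr _ _ fun k => Fintype.sum_congr _ _ fun l => by rw [Mkl_comm]
  calc 2 * Mtot ρ
      = ∑ k, ∑ l, ((if k < l then Mkl ρ k l else 0) + if l < k then Mkl ρ k l else 0) := by
        simp only [Finset.sum_add_distrib, ← hlt, ← hgt, two_mul]
    _ = ∑ k, ∑ l ∈ Finset.univ.erase k, Mkl ρ k l := by
        refine Finset.sum_congr rfl fun k _ => ?_
        rw [← Finset.filter_ne, Finset.sum_filter]
        refine Finset.sum_congr rfl fun l _ => ?_
        obtain hkl | rfl | hkl := lt_trichotomy k l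
        · simp [hkl, hkl.ne, hkl.not_gt]
        · simp
        · simp [hkl, hkl.ne', hkl.not_gt]

end Correlations

section Products

variable {n b : ℕ} {P : Fin b → Finset (Fin n)} {ρ : Matrix (Fin n → Fin 2) (Fin n → Fin 2) ℂ}

/-- The operator `ρ` is a tensor product of operators on the blocks of `P`. When `P` is a partition
and `ρ` is a density matrix, the factors can be rescaled to density matrices. -/
def FactorsOver (ρ : Matrix (Fin n → Fin 2) (Fin n → Fin 2) ℂ) (P : Fin b → Finset (Fin n)) :
    Prop :=
  ∃ σ : (m : Fin b) → Matrix (P m → Fin 2) (P m → Fin 2) ℂ,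
    ∀ x y, ρ x y = ∏ m, σ m (restrictB (P m) x) (restrictB (P m) y)

theorem IsProductOver.factorsOver {ψ : (Fin n → Fin 2) → ℂ} (hψ : IsProductOver ψ P) :
    FactorsOver (pureDensity ψ) P := by
  obtain ⟨φ, -, hφ⟩ := hψ
  refine ⟨fun m => pureDensity (φ m), fun x y => ?_⟩
  simp only [pureDensity, Matrix.of_apply, hφ, map_prod, Finset.prod_mul_distrib]

/-- The qubits, sorted by the block of the partition that contains them. -/
noncomputable def IsPartition.sigmaEquiv (hP : IsPartition P) : (Σ m, P m) ≃ Fin n :=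
  Equiv.ofBijective (fun q => q.2) <| by
    obtain ⟨-, hdisj, hcover⟩ := hP
    refine ⟨?_, fun q => (hcover q).elim fun m hm => ⟨⟨m, q, hm⟩, rfl⟩⟩
    rintro ⟨m, q, hq⟩ ⟨m', q', hq'⟩ (rfl : q = q')
    obtain rfl : m = m' := by
      by_contra hne
      exact Finset.disjoint_left.mp (hdisj m m' hne) hq hq'
    rfl

/-- Bit strings on all qubits as families of bit strings on the blocks; the components of the image
of `x` are `restrictB (P m) x`. -/
noncomputable def IsPartition.bitsEquiv (hP : IsPartition P) :
    (Fin n → Fin 2) ≃ ((m : Fin b) → P m → Fin 2) :=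
  (hP.sigmaEquiv.symm.arrowCongr (Equiv.refl _)).trans (Equiv.piCurry fun _ _ => Fin 2)

theorem kronOp_apply_eq_prod_blocks (hP : IsPartition P) (f : Fin n → ℕ) (x y : Fin n → Fin 2) :
    kronOp f x y =
      ∏ m, kronOp (fun q : P m => f q) (restrictB (P m) x) (restrictB (P m) y) := by
  simp only [kronOp, Matrix.of_apply, ← hP.sigmaEquiv.prod_comp, Fintype.prod_sigma]
  rfl

theorem trace_mul_kronOp_eq_prod_blocks (hP : IsPartition P)
    {σ : (m : Fin b) → Matrix (P m → Fin 2) (P m → Fin 2) ℂ}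
    (hσ : ∀ x y, ρ x y = ∏ m, σ m (restrictB (P m) x) (restrictB (P m) y)) (f : Fin n → ℕ) :
    (ρ * kronOp f).trace = ∏ m, (σ m * kronOp fun q : P m => f q).trace := by
  simp only [Matrix.trace, Matrix.diag_apply, Matrix.mul_apply, hσ,
    kronOp_apply_eq_prod_blocks hP f, ← Finset.prod_mul_distrib, Fintype.prod_sum]
  refine Fintype.sum_equiv hP.bitsEquiv _ _ fun x => ?_
  exact Fintype.sum_equiv hP.bitsEquiv _ _ fun y => rfl

theorem corr_eq_bloch_mul_bloch (hρ : IsDensityMatrix ρ) (hP : IsPartition P)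
    (hfac : FactorsOver ρ P) {m : Fin b} {k l : Fin n} (hk : k ∈ P m) (hl : l ∉ P m) (i j : ℕ) :
    corr ρ k l i j = bloch ρ k i * bloch ρ l j := by
  obtain ⟨σ, hσ⟩ := hfac
  set fk : Fin n → ℕ := fun q => if q = k then i else 0
  set fl : Fin n → ℕ := fun q => if q = l then j else 0
  set fkl : Fin n → ℕ := fun q => if q = k then i else if q = l then j else 0
  -- No block contains both `k` and `l`, so the identity holds block by block.
  have hmul : (ρ * kronOp fkl).trace * (ρ * kronOp fun _ => 0).trace =
      (ρ * kronOp fk).trace * (ρ * kronOp fl).trace := by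
    simp only [trace_mul_kronOp_eq_prod_blocks hP hσ, ← Finset.prod_mul_distrib]
    refine Finset.prod_congr rfl fun m' _ => ?_
    obtain rfl | hm' := eq_or_ne m' m
    · have hne (q : P m') : (q : Fin n) ≠ l := ne_of_mem_of_not_mem q.2 hl
      simp only [fkl, fk, fl, hne, if_false]
    · have hne (q : P m') : (q : Fin n) ≠ k :=
        ne_of_mem_of_not_mem q.2 (Finset.disjoint_right.mp (hP.2.1 m' m hm') hk)
      simp only [fkl, fk, fl, hne, if_false, mul_comm]
  rw [kronOp_zero, mul_one, hρ.trace_eq_one, mul_one] at hmul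
  have hre := congrArg Complex.re hmul
  rwa [Complex.mul_re, trace_mul_kronOp_im_eq_zero hρ.isHermitian, zero_mul, sub_zero] at hre

theorem Mkl_eq_zero_of_bloch_eq_zero (hρ : IsDensityMatrix ρ) (hP : IsPartition P)
    (hfac : FactorsOver ρ P) {m : Fin b} {k l : Fin n} (hk : k ∈ P m) (hl : l ∉ P m)
    (hbloch : bloch ρ k 1 = 0 ∧ bloch ρ k 2 = 0) : Mkl ρ k l = 0 := by
  refine Finset.sum_eq_zero fun i hi => Finset.sum_eq_zero fun j _ => ?_
  have hi : bloch ρ k i = 0 := by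
    obtain ⟨_, _⟩ := Finset.mem_Icc.mp hi
    interval_cases i
    exacts [hbloch.1, hbloch.2]
  rw [corr_eq_bloch_mul_bloch hρ hP hfac hk hl, hi, zero_mul, zero_pow two_ne_zero]

end Products

section Counting

theorem sum_le_card_mul_of_pairwise_add_le {ι : Type*} {s : Finset ι} {x : ι → ℝ} {c : ℝ}
    (hs : s.card ≠ 1) (hpair : (s : Set ι).Pairwise fun a b => x a + x b ≤ 2 * c) :
    ∑ a ∈ s, x a ≤ s.card * c := by
  classical
  by_cases hx : ∀ a ∈ s, x a ≤ c
  · simpa using Finset.sum_le_card_nsmul s x c hx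
  push Not at hx
  obtain ⟨a, ha, hxa⟩ := hx
  have hrest : ∑ b ∈ s.erase a, x b ≤ (s.erase a).card * (2 * c - x a) := by
    rw [← nsmul_eq_mul]
    refine Finset.sum_le_card_nsmul _ _ _ fun b hb => ?_
    have := hpair ha (Finset.mem_of_mem_erase hb) (Finset.ne_of_mem_erase hb).symm
    linarith
  have hcard : ((s.erase a).card : ℝ) + 1 = s.card := by
    exact_mod_cast Finset.card_erase_add_one ha
  have hcard_pos : (1 : ℝ) ≤ (s.erase a).card := by
    have := Finset.card_erase_add_one ha
    exact_mod_cast (by omega : 1 ≤ (s.erase a).card)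
  rw [← Finset.add_sum_erase s x ha, ← hcard]
  nlinarith

/-- The bound that monogamy puts on the sum of `M_kl` over the other qubits `l` of a block of `a`
qubits containing `k`; for `a = 2` there is no second pair to trade off against. -/
noncomputable def rowBound (a : ℕ) : ℝ := if a = 2 then 2 else a - 1

theorem sum_le_rowBound {ι : Type*} [DecidableEq ι] {A : Finset ι} {k : ι} (hk : k ∈ A) {x : ι → ℝ}
    (hle : ∀ l ≠ k, x l ≤ 2) (hpair : ∀ l ≠ k, ∀ m ≠ k, l ≠ m → x l + x m ≤ 2) :
    ∑ l ∈ A.erase k, x l ≤ rowBound A.card := by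
  have hcard := Finset.card_erase_add_one hk
  unfold rowBound
  split_ifs with hA
  · simpa [show (A.erase k).card = 1 by omega] using
      Finset.sum_le_card_nsmul (A.erase k) x 2 fun l hl => hle l (Finset.ne_of_mem_erase hl)
  · have hsum := sum_le_card_mul_of_pairwise_add_le (s := A.erase k) (x := x) (c := 1) (by omega)
      fun l hl m hm hlm => by
        simpa using hpair l (Finset.ne_of_mem_erase hl) m (Finset.ne_of_mem_erase hm) hlm
    rw [← hcard]
    simpa using hsum

theorem mul_rowBound_add_mul_rowBound_le {a b : ℕ} (ha : 0 < a) (hb : 0 < b) (hab : 5 ≤ a + b) :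
    a * rowBound a + b * rowBound b ≤ 2 * ((a + b - 1).choose 2 : ℝ) := by
  rw [Nat.cast_choose_two, Nat.cast_pred (by omega), Nat.cast_add]
  have ha' : (1 : ℝ) ≤ a := by exact_mod_cast ha
  have hb' : (1 : ℝ) ≤ b := by exact_mod_cast hb
  have hab' : (5 : ℝ) ≤ a + b := by exact_mod_cast hab
  unfold rowBound
  split_ifs with ha₂ hb₂ hb₂
  · omega
  · rw [ha₂, Nat.cast_two] at hab' ⊢
    linarith
  · rw [hb₂, Nat.cast_two] at hab' ⊢
    linarith
  · linarith [mul_nonneg (sub_nonneg.mpr ha') (sub_nonneg.mpr hb')]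

theorem sum_sum_erase_le_two_mul_choose {ι : Type*} [Fintype ι] [DecidableEq ι] {g : ι → ι → ℝ}
    (hcard : 5 ≤ Fintype.card ι) (hnonneg : ∀ k l, 0 ≤ g k l) (hcomm : ∀ k l, g k l = g l k)
    (hpair : ∀ k l m, k ≠ l → k ≠ m → l ≠ m → g k l + g k m ≤ 2) {A : Finset ι}
    (hA : A.Nonempty) (hA' : Aᶜ.Nonempty) (hcross : ∀ k ∈ A, ∀ l ∉ A, g k l = 0) :
    ∑ k, ∑ l ∈ Finset.univ.erase k, g k l ≤ 2 * ((Fintype.card ι - 1).choose 2 : ℝ) := by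
  have hle (k l : ι) (hlk : l ≠ k) : g k l ≤ 2 := by
    obtain ⟨m, hm⟩ : ∃ m, m ∉ ({k, l} : Finset ι) := by
      simpa using Finset.exists_mem_notMem_of_card_lt_card (s := {k, l}) (t := Finset.univ)
        (Finset.card_le_two.trans_lt (by rw [Finset.card_univ]; omega))
    simp only [Finset.mem_insert, Finset.mem_singleton, not_or] at hm
    linarith [hpair k l m hlk.symm (Ne.symm hm.1) (Ne.symm hm.2), hnonneg k m]
  have hblock (B : Finset ι) (hB : ∀ k ∈ B, ∀ l ∉ B, g k l = 0) :
      ∑ k ∈ B, ∑ l ∈ Finset.univ.erase k, g k l ≤ B.card * rowBound B.card := by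
    rw [← nsmul_eq_mul]
    refine Finset.sum_le_card_nsmul _ _ _ fun k hk => ?_
    rw [← Finset.sum_subset (Finset.erase_subset_erase k (Finset.subset_univ B))
      fun l hl hlB => hB k hk l fun h => hlB (Finset.mem_erase.mpr ⟨Finset.ne_of_mem_erase hl, h⟩)]
    exact sum_le_rowBound hk (hle k) fun l hl m hm => hpair k l m hl.symm hm.symm
  calc ∑ k, ∑ l ∈ Finset.univ.erase k, g k l
      = ∑ k ∈ A, ∑ l ∈ Finset.univ.erase k, g k l +
          ∑ k ∈ Aᶜ, ∑ l ∈ Finset.univ.erase k, g k l := (Finset.sum_add_sum_compl A _).symm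
    _ ≤ A.card * rowBound A.card + Aᶜ.card * rowBound Aᶜ.card :=
        add_le_add (hblock A hcross) (hblock Aᶜ fun k hk l hl =>
          hcomm k l ▸ hcross l (by simpa using hl) k (by simpa using hk))
    _ ≤ 2 * ((Fintype.card ι - 1).choose 2 : ℝ) := by
        rw [← Finset.card_add_card_compl A]
        exact mul_rowBound_add_mul_rowBound_le hA.card_pos hA'.card_pos
          (hcard.trans_eq (Finset.card_add_card_compl A).symm)

end Counting

theorem IsPartition.compl_nonempty {n b : ℕ} {P : Fin b → Finset (Fin n)} (hP : IsPartition P)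
    (hb : 2 ≤ b) (m : Fin b) : (P m)ᶜ.Nonempty := by
  have : Nontrivial (Fin b) := Fin.nontrivial_iff_two_le.mpr hb
  obtain ⟨m', hm'⟩ := exists_ne m
  obtain ⟨q, hq⟩ := hP.1 m'
  exact ⟨q, Finset.mem_compl.mpr (Finset.disjoint_left.mp (hP.2.1 m' m hm') hq)⟩

theorem genuinely_entangled_of_Mtot_gt_general {n b : ℕ} (hn : 5 ≤ n) (hb : 2 ≤ b)
    {ρ : Matrix (Fin n → Fin 2) (Fin n → Fin 2) ℂ} (hρ : IsDensityMatrix ρ)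
    (hM : Mtot ρ > ((n - 1).choose 2 : ℝ)) {P : Fin b → Finset (Fin n)} (hP : IsPartition P)
    (m : Fin b) (hbloch : ∀ q ∈ P m, bloch ρ q 1 = 0 ∧ bloch ρ q 2 = 0) :
    ¬ FactorsOver ρ P := by
  intro hfac
  have hsum := sum_sum_erase_le_two_mul_choose (g := Mkl ρ) (by simpa using hn) (Mkl_nonneg ρ)
    (Mkl_comm ρ) (fun _ _ _ => Mkl_add_Mkl_le_two hρ) (hP.1 m) (hP.compl_nonempty hb m)
    fun k hk l hl => Mkl_eq_zero_of_bloch_eq_zero hρ hP hfac hk hl (hbloch k hk)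
  rw [Fintype.card_fin] at hsum
  linarith [two_mul_Mtot ρ]

/-- Proposition 5, main case: for `n ≥ 5`, if a preferred-basis
pure state satisfies `M(ρ_ψ) > C(n-1,2)`, then `ψ` is genuinely `n`-partite
entangled: it is a product over no bipartition. -/
theorem genuinely_entangled_of_Mtot_gt (n : ℕ) (hn : 5 ≤ n)
    (ψ : (Fin n → Fin 2) → ℂ) (hψ : UnitVec ψ)
    (hpb : PreferredBasis (pureDensity ψ))
    (hM : Mtot (pureDensity ψ) > ((n - 1).choose 2 : ℝ)) :
    ¬ ∃ P : Fin 2 → Finset (Fin n), IsPartition P ∧ IsProductOver ψ P := by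
  rintro ⟨P, hP, hprod⟩
  exact genuinely_entangled_of_Mtot_gt_general hn le_rfl hψ.isDensityMatrix hM hP 0
    (fun q _ => hpb q) hprod.factorsOver
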